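/- The map (F,K) ↦ D_F(K) is a Borel measurable function from C[a,b] × K[a,b] to K[a,b]. -/

import Mathlib

open MeasureTheory Set Filter

noncomputable section

attribute [local instance] Classical.propDecidable

/-- The oscillation `ω(F, J)` of `F` on the set `J`. -/
def osc (F : ℝ → ℝ) (J : Set ℝ) : ℝ :=
  sSup {d : ℝ | ∃ x ∈ J, ∃ y ∈ J, d = |F x - F y|}

/-- `D` is a `K`-edged pre-partition of `[a,b]`: a finite nonempty collection of
pairwise non-overlapping closed subintervals of `[a,b]` whose endpoints lie in `K`. -/
def IsPrePartition (a b : ℝ) (K : Set ℝ) (D : Finset (ℝ × ℝ)) : Prop :=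
  D.Nonempty ∧
  (∀ p ∈ D, p.1 ≤ p.2 ∧ p.1 ∈ K ∧ p.2 ∈ K ∧ Icc p.1 p.2 ⊆ Icc a b) ∧
  (D : Set (ℝ × ℝ)).Pairwise fun p q => p.2 ≤ q.1 ∨ q.2 ≤ p.1

/-- `F ∈ AC_*(K)`: absolute continuity in the restricted sense on `K`. -/
def ACStar (a b : ℝ) (F : ℝ → ℝ) (K : Set ℝ) : Prop :=
  ∀ ε > (0:ℝ), ∃ δ > (0:ℝ), ∀ D : Finset (ℝ × ℝ), IsPrePartition a b K D →
    (∑ p ∈ D, (p.2 - p.1)) < δ → (∑ p ∈ D, osc F (Icc p.1 p.2)) < ε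

/-- `F ∈ ACG_*(K)`: `K` is a countable union of closed sets `Kₙ ⊆ [a,b]` with `F ∈ AC_*(Kₙ)`. -/
def ACGStar (a b : ℝ) (F : ℝ → ℝ) (K : Set ℝ) : Prop :=
  ∃ C : ℕ → Set ℝ, (∀ n, IsClosed (C n) ∧ C n ⊆ Icc a b ∧ ACStar a b F (C n)) ∧
    K = ⋃ n, C n

/-- `F` is the indefinite Denjoy integral of `f` on `[a,b]`:
`F` is continuous on `[a,b]`, `F(a) = 0`, `F ∈ ACG_*([a,b])`, and `F' = f` a.e. on `[a,b]`. -/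
def HasDenjoyIntegralFn (a b : ℝ) (f F : ℝ → ℝ) : Prop :=
  ContinuousOn F (Icc a b) ∧ F a = 0 ∧ ACGStar a b F (Icc a b) ∧
    ∀ᵐ x ∂(volume.restrict (Icc a b)), HasDerivAt F (f x) x

/-- `f ∈ Den[a,b]`: `f` is Denjoy integrable on `[a,b]`. -/
def DenjoyIntegrable (a b : ℝ) (f : ℝ → ℝ) : Prop :=
  ∃ F : ℝ → ℝ, HasDenjoyIntegralFn a b f F

/-- The Denjoy integral `∫_a^b f` (junk value `0` if `f` is not Denjoy integrable). -/
def denjoyIntegral (a b : ℝ) (f : ℝ → ℝ) : ℝ :=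
  if h : DenjoyIntegrable a b f then Classical.choose h b else 0

/-- The derivative `D_f(K)`: points of `K` at which `f` is not locally Lebesgue integrable
relative to `K`. -/
def Df (f : ℝ → ℝ) (K : Set ℝ) : Set ℝ :=
  {x ∈ K | ∀ c d : ℝ, c < x → x < d → ¬ IntegrableOn f (Icc c d ∩ K) volume}

/-- The derivative `D_F(K)`: points of `K` at which `F` is not locally `AC_*` relative to `K`. -/
def DF (a b : ℝ) (F : ℝ → ℝ) (K : Set ℝ) : Set ℝ :=
  {x ∈ K | ∀ c d : ℝ, c < x → x < d → ¬ ACStar a b F (Icc c d ∩ K)}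

/-- The derivative `D_{f,F}(K) = D_f(K) ∪ D_F(K)`. -/
def DfF (a b : ℝ) (f F : ℝ → ℝ) (K : Set ℝ) : Set ℝ := Df f K ∪ DF a b F K

/-- Transfinite iterates of a derivative operation on sets:
`D⁰(K) = K`, `D^(α+1)(K) = D(D^α(K))`, and `D^α(K) = ⋂_(β<α) D^β(K)` for limit `α`. -/
def derivIter (D : Set ℝ → Set ℝ) (K : Set ℝ) (α : Ordinal.{0}) : Set ℝ :=
  Ordinal.limitRecOn α K (fun _ ih => D ih) (fun o _ ih => ⋂ β : Iio o, ih β.1 β.2)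

/-- `D^∞(K) = ⋂_(α<ω₁) D^α(K)`. -/
def derivInfty (D : Set ℝ → Set ℝ) (K : Set ℝ) : Set ℝ :=
  ⋂ (α : Ordinal.{0}) (_ : α.card ≤ Cardinal.aleph0), derivIter D K α

/-- `K[a,b]`: the space of closed subsets of `[a,b]` (topologized by the Hausdorff
extended metric, which for the compact set `[a,b]` agrees with the Vietoris topology). -/
abbrev KSpace (a b : ℝ) := TopologicalSpace.Closeds (Icc a b)

lemma isClosed_locSet (K : Set ℝ) (hK : IsClosed K) (P : ℝ → ℝ → Prop) :
    IsClosed {x ∈ K | ∀ c d : ℝ, c < x → x < d → ¬ P c d} := by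
  have hS : IsOpen {x : ℝ | ∃ c d : ℝ, c < x ∧ x < d ∧ P c d} := by
    rw [isOpen_iff_mem_nhds]
    rintro x ⟨c, d, hc, hd, hP⟩
    exact Filter.mem_of_superset (Ioo_mem_nhds hc hd) fun y hy => ⟨c, d, hy.1, hy.2, hP⟩
  have he : {x ∈ K | ∀ c d : ℝ, c < x → x < d → ¬ P c d}
      = K ∩ {x : ℝ | ∃ c d : ℝ, c < x ∧ x < d ∧ P c d}ᶜ := by
    ext x
    constructor
    · rintro ⟨hx, h⟩
      exact ⟨hx, fun hmem => by obtain ⟨c, d, hc, hd, hP⟩ := hmem; exact h c d hc hd hP⟩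
    · rintro ⟨hx, h⟩
      exact ⟨hx, fun c d hc hd hP => h ⟨c, d, hc, hd, hP⟩⟩
  rw [he]
  exact hK.inter hS.isClosed_compl

lemma isClosed_DF (a b : ℝ) (F : ℝ → ℝ) (K : Set ℝ) (hK : IsClosed K) :
    IsClosed (DF a b F K) := by
  unfold DF; exact isClosed_locSet K hK _

/-- The map `(F, K) ↦ D_F(K)`. -/
def DFMap (a b : ℝ) (hab : a < b) : C(Icc a b, ℝ) × KSpace a b → KSpace a b := fun p =>
  ⟨{x : Icc a b | (x : ℝ) ∈ DF a b (fun y => p.1 (projIcc a b hab.le y))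
      (Subtype.val '' (p.2 : Set (Icc a b)))},
   (isClosed_DF _ _ _ _ (p.2.2.isCompact.image continuous_subtype_val).isClosed).preimage
     continuous_subtype_val⟩

/-!
A failure of `AC_*` is witnessed by finitely many subintervals of `[a,b]` with endpoints in `K`,
of total length at most `δ` and total oscillation at least `ε`. For a fixed number of intervals
this is a closed condition on the parameters and the endpoints, and the endpoints range over a
compact space, so its projection to the parameters is closed; taking `ε` and `δ` of the form
`1 / (n + 1)` makes `AC_*` a Borel condition. The complement of `D_F(K)` is the union of the
rational intervals on which `F` is `AC_*` relative to `K`, so by compactness `D_F(K)` misses a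
given compact set iff finitely many such intervals cover it, and these events generate the Borel
sets of `K[a,b]`.
-/

section Hyperspace

open TopologicalSpace

theorem closeds_topology_eq_induced_vietoris (X : Type*) [UniformSpace X] [CompactSpace X] :
    (inferInstance : TopologicalSpace (Closeds X)) =
      .induced (SetLike.coe : Closeds X → Set X) (.vietoris X) := by
  refine ext_nhds fun K => ?_
  let := UniformSpace.hausdorff X
  rw [Closeds.isUniformEmbedding_coe.isEmbedding.nhds_eq_comap,
    K.isClosed.isCompact.nhds_hausdorff_eq_nhds_vietoris, @nhds_induced _ _ (.vietoris X)]

theorem isClosed_setOfPred_mem_closeds (X : Type*) [EMetricSpace X] :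
    IsClosed {p : Closeds X × X | p.2 ∈ p.1} := by
  have h : {p : Closeds X × X | p.2 ∈ p.1} = {p | Metric.infEDist p.2 (p.1 : Set X) = 0} :=
    Set.ext fun p => Metric.mem_iff_infEDist_zero_of_closed p.1.isClosed
  rw [h]
  exact isClosed_eq (Closeds.continuous_infEDist.comp continuous_swap) continuous_const

variable {X Z : Type*} [EMetricSpace X] [CompactSpace X] [MeasurableSpace Z] {D : Z → Closeds X}

theorem measurable_closeds_of_isCompact
    (hD : ∀ C : Set X, IsCompact C → MeasurableSet {z | ((D z : Set X) ∩ C).Nonempty}) :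
    Measurable[_, borel (Closeds X)] D := by
  have : SecondCountableTopology (Closeds X) := EMetric.secondCountable_of_sigmaCompact _
  rw [borel_eq_generateFrom_of_subbasis
    ((closeds_topology_eq_induced_vietoris X).trans induced_generateFrom_eq)]
  refine measurable_generateFrom ?_
  rintro _ ⟨_, ⟨U, hU, rfl⟩ | ⟨U, hU, rfl⟩, rfl⟩
  · convert! (hD Uᶜ hU.isClosed_compl.isCompact).compl using 1
    ext z
    simp [← sdiff_eq, Set.sdiff_nonempty]
  · obtain ⟨C, hC, -, rfl, -⟩ := IsOpen.exists_iUnion_isClosed hU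
    convert! MeasurableSet.iUnion fun n => hD (C n) (hC n).isCompact using 1
    ext z
    simp [inter_iUnion]

theorem measurable_closeds_of_compl_eq_iUnion {ι : Type*} [Countable ι] {B : ι → Set X}
    {P : ι → Z → Prop} (hB : ∀ i, IsOpen (B i)) (hP : ∀ i, MeasurableSet {z | P i z})
    (hD : ∀ z, (D z : Set X)ᶜ = ⋃ (i) (_ : P i z), B i) :
    Measurable[_, borel (Closeds X)] D := by
  refine measurable_closeds_of_isCompact fun C hC => ?_
  have miss_iff (z : Z) : ¬ ((D z : Set X) ∩ C).Nonempty ↔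
      ∃ S : Finset ι, C ⊆ ⋃ i ∈ S, B i ∧ ∀ i ∈ S, P i z := by
    rw [not_nonempty_iff_eq_empty, ← disjoint_iff_inter_eq_empty, disjoint_comm,
      ← subset_compl_iff_disjoint_right, hD]
    constructor
    · intro hCB
      obtain ⟨S, hSP, hS, hCS⟩ :=
        hC.elim_finite_subcover_image (b := {i | P i z}) (fun i _ => hB i) hCB
      exact ⟨hS.toFinset, by simpa using hCS, fun i hi => hSP (hS.mem_toFinset.1 hi)⟩
    · rintro ⟨S, hCS, hS⟩
      exact hCS.trans (iUnion₂_mono' fun i hi => ⟨i, hS i hi, Subset.rfl⟩)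
  refine .of_compl ?_
  simp only [compl_ofPred, miss_iff, ofPred_exists, ofPred_and, ofPred_forall]
  exact .iUnion fun S => .inter (.const _) (S.measurableSet_biInter fun i _ => hP i)

end Hyperspace

section Oscillation

theorem osc_singleton (F : ℝ → ℝ) (x : ℝ) : osc F {x} = 0 := by
  simp [osc]

theorem osc_uIcc_eq_sSup_image (F : ℝ → ℝ) (x y : ℝ) :
    osc F (uIcc x y) = sSup ((fun t : ℝ × ℝ =>
      |F (AffineMap.lineMap x y t.1) - F (AffineMap.lineMap x y t.2)|) ''
        (Icc 0 1 ×ˢ Icc 0 1)) := by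
  rw [← segment_eq_uIcc, segment_eq_image_lineMap, osc]
  congr 1
  ext d
  simp only [mem_image, Prod.exists, mem_prod]
  grind

theorem continuous_osc_uIcc {Z : Type*} [TopologicalSpace Z] {F : Z → ℝ → ℝ} {x y : Z → ℝ}
    (hF : Continuous ↿F) (hx : Continuous x) (hy : Continuous y) :
    Continuous fun z => osc (F z) (uIcc (x z) (y z)) := by
  simp only [osc_uIcc_eq_sSup_image]
  refine (isCompact_Icc.prod isCompact_Icc).continuous_sSup ?_
  have hF_comp {g : Z × ℝ × ℝ → ℝ} (hg : Continuous g) : Continuous fun w => F w.1 (g w) :=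
    hF.comp (continuous_fst.prodMk hg)
  simp only [AffineMap.lineMap_apply_ring']
  exact ((hF_comp (by fun_prop)).sub (hF_comp (by fun_prop))).abs

end Oscillation

section AbsoluteContinuity

variable {a b : ℝ} {F : ℝ → ℝ} {K L : Set ℝ}

theorem ACStar.mono (hL : ACStar a b F L) (hKL : K ⊆ L) : ACStar a b F K := by
  intro ε hε
  obtain ⟨δ, hδ, hosc⟩ := hL ε hε
  refine ⟨δ, hδ, fun D ⟨hne, hD, hdisj⟩ => hosc D ⟨hne, fun p hp => ?_, hdisj⟩⟩
  obtain ⟨hle, hp₁, hp₂, hsub⟩ := hD p hp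
  exact ⟨hle, hKL hp₁, hKL hp₂, hsub⟩

theorem acStar_empty (a b : ℝ) (F : ℝ → ℝ) : ACStar a b F ∅ :=
  fun _ _ => ⟨1, one_pos, fun _ ⟨⟨p, hp⟩, hD, _⟩ => ((hD p hp).2.1).elim⟩

theorem exists_acStar_of_notMem_DF (hK : IsClosed K) {x : ℝ} (hx : x ∉ DF a b F K) :
    ∃ c d : ℝ, c < x ∧ x < d ∧ ACStar a b F (Icc c d ∩ K) := by
  by_cases hxK : x ∈ K
  · by_contra! h
    exact hx ⟨hxK, h⟩
  · obtain ⟨c, d, hxcd, hcd⟩ := mem_nhds_iff_exists_Ioo_subset.1 (hK.isOpen_compl.mem_nhds hxK)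
    obtain ⟨c', hcc', hc'x⟩ := exists_between hxcd.1
    obtain ⟨d', hxd', hd'd⟩ := exists_between hxcd.2
    refine ⟨c', d', hc'x, hxd', (acStar_empty a b F).mono ?_⟩
    rintro y ⟨hy, hyK⟩
    exact hcd ⟨hcc'.trans_le hy.1, hy.2.trans_lt hd'd⟩ hyK

theorem compl_DF_eq_iUnion_rat (hK : IsClosed K) :
    (DF a b F K)ᶜ = ⋃ (q : ℚ × ℚ) (_ : ACStar a b F (Icc (q.1 : ℝ) q.2 ∩ K)),
      Ioo (q.1 : ℝ) q.2 := by
  ext x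
  simp only [mem_compl_iff, mem_iUnion, exists_prop]
  constructor
  · intro hx
    obtain ⟨c, d, hcx, hxd, hac⟩ := exists_acStar_of_notMem_DF hK hx
    obtain ⟨r, hcr, hrx⟩ := exists_rat_btwn hcx
    obtain ⟨s, hxs, hsd⟩ := exists_rat_btwn hxd
    exact ⟨(r, s), hac.mono (inter_subset_inter_left _ (Icc_subset_Icc hcr.le hsd.le)), hrx, hxs⟩
  · rintro ⟨q, hac, hx⟩ hxD
    exact hxD.2 _ _ hx.1 hx.2 hac

/-- The indexed counterpart of `IsPrePartition`, with endpoints in a set `E` of points of `[a,b]`.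
Empty families are allowed and degenerate intervals may repeat, so that the condition is closed
in the compact space `ι → [a,b] × [a,b]`. -/
def IsPrePartitionFamily {ι : Type*} (E : Set (Icc a b)) (I : ι → Icc a b × Icc a b) : Prop :=
  (∀ i, (I i).1 ≤ (I i).2 ∧ (I i).1 ∈ E ∧ (I i).2 ∈ E) ∧
  Pairwise fun i j => (I i).2 ≤ (I j).1 ∨ (I j).2 ≤ (I i).1

variable {E : Set (Icc a b)}

theorem IsPrePartitionFamily.fst_eq_snd {ι : Type*} {I : ι → Icc a b × Icc a b}
    (hI : IsPrePartitionFamily E I) {i j : ι} (hij : i ≠ j) (h : I i = I j) :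
    (I i).1 = (I i).2 := by
  have hle := (hI.1 i).1
  rcases hI.2 hij with hij | hij
  · exact hle.antisymm (h ▸ hij)
  · exact hle.antisymm (h ▸ hij)

theorem IsPrePartitionFamily.isPrePartition {ι : Type*} [Fintype ι] [Nonempty ι]
    {I : ι → Icc a b × Icc a b} (hI : IsPrePartitionFamily E I) :
    IsPrePartition a b (Subtype.val '' E)
      (Finset.univ.image fun i => (((I i).1 : ℝ), ((I i).2 : ℝ))) := by
  refine ⟨Finset.univ_nonempty.image _, ?_, ?_⟩
  · simp only [Finset.forall_mem_image]
    exact fun i _ => ⟨(hI.1 i).1, mem_image_of_mem _ (hI.1 i).2.1,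
      mem_image_of_mem _ (hI.1 i).2.2, Icc_subset_Icc (I i).1.2.1 (I i).2.2.2⟩
  · rw [Finset.coe_image, Finset.coe_univ, image_univ]
    rintro _ ⟨i, rfl⟩ _ ⟨j, rfl⟩ hne
    exact hI.2 fun hij => hne (by rw [hij])

theorem IsPrePartitionFamily.sum_image {ι : Type*} [Fintype ι] {I : ι → Icc a b × Icc a b}
    (hI : IsPrePartitionFamily E I) {g : ℝ × ℝ → ℝ} (hg : ∀ x, g (x, x) = 0) :
    ∑ p ∈ Finset.univ.image (fun i => (((I i).1 : ℝ), ((I i).2 : ℝ))), g p =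
      ∑ i, g ((I i).1, (I i).2) := by
  refine Finset.sum_image_of_pairwise_eq_zero fun i _ j _ hij h => ?_
  simp only [Prod.mk.injEq, Subtype.coe_inj] at h
  simp only [hI.fst_eq_snd hij (Prod.ext h.1 h.2), hg]

theorem IsPrePartition.exists_family {D : Finset (ℝ × ℝ)}
    (hD : IsPrePartition a b (Subtype.val '' E) D) :
    ∃ I : Fin D.card → Icc a b × Icc a b, IsPrePartitionFamily E I ∧
      ∀ g : ℝ × ℝ → ℝ, ∑ i, g ((I i).1, (I i).2) = ∑ p ∈ D, g p := by
  obtain ⟨-, hmem, hdisj⟩ := hD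
  have lift_pair (p : D) : ∃ s : Icc a b × Icc a b,
      s.1 ∈ E ∧ s.2 ∈ E ∧ ((s.1 : ℝ), (s.2 : ℝ)) = p := by
    obtain ⟨-, ⟨x, hx, hxp⟩, ⟨y, hy, hyp⟩, -⟩ := hmem p p.2
    exact ⟨(x, y), hx, hy, Prod.ext hxp hyp⟩
  choose s hs₁ hs₂ hs using lift_pair
  have hfst (p : D) : ((s p).1 : ℝ) = p.1.1 := congrArg Prod.fst (hs p)
  have hsnd (p : D) : ((s p).2 : ℝ) = p.1.2 := congrArg Prod.snd (hs p)
  refine ⟨s ∘ D.equivFin.symm, ⟨fun i => ⟨?_, hs₁ _, hs₂ _⟩, fun i j hij => ?_⟩, fun g => ?_⟩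
  · simpa only [Function.comp_apply, ← Subtype.coe_le_coe, hfst, hsnd] using
      (hmem _ (D.equivFin.symm i).2).1
  · simpa only [Function.comp_apply, ← Subtype.coe_le_coe, hfst, hsnd] using
      hdisj (D.equivFin.symm i).2 (D.equivFin.symm j).2
        (Subtype.coe_ne_coe.2 (D.equivFin.symm.injective.ne hij))
  · simp only [Function.comp_apply, hs]
    rw [D.equivFin.symm.sum_comp (fun p : D => g p), D.sum_coe_sort]

theorem acStar_image_iff_forall_family :
    ACStar a b F (Subtype.val '' E) ↔ ∀ ε > 0, ∃ δ > 0, ∀ (n : ℕ) (I : Fin n → Icc a b × Icc a b),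
      IsPrePartitionFamily E I → ∑ i, ((I i).2 - (I i).1 : ℝ) ≤ δ →
        ∑ i, osc F (Icc (I i).1 (I i).2) < ε := by
  refine forall₂_congr fun ε hε => ⟨?_, ?_⟩
  · rintro ⟨δ, hδ, hosc⟩
    refine ⟨δ / 2, half_pos hδ, fun n I hI hlen => ?_⟩
    rcases isEmpty_or_nonempty (Fin n) with _ | _
    · simpa using hε
    · have hlen' : ∑ i, ((I i).2 - (I i).1 : ℝ) < δ := hlen.trans_lt (half_lt_self hδ)
      have := hosc _ hI.isPrePartition
      rw [hI.sum_image (g := fun p => p.2 - p.1) fun x => sub_self x,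
        hI.sum_image (g := fun p => osc F (Icc p.1 p.2)) fun x => by
          rw [Icc_self, osc_singleton]] at this
      exact this hlen'
  · rintro ⟨δ, hδ, hosc⟩
    refine ⟨δ, hδ, fun D hD hlen => ?_⟩
    obtain ⟨I, hI, hsum⟩ := hD.exists_family
    rw [← hsum fun p => osc F (Icc p.1 p.2)]
    rw [← hsum fun p => p.2 - p.1] at hlen
    exact hosc _ I hI hlen.le

end AbsoluteContinuity

section Measurability

variable {a b : ℝ} {Z : Type*} [TopologicalSpace Z] {F : Z → ℝ → ℝ} {E : Z → Set (Icc a b)}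

theorem isClosed_setOfPred_isPrePartitionFamily {ι : Type*}
    (hE : IsClosed {p : Z × Icc a b | p.2 ∈ E p.1}) :
    IsClosed {q : Z × (ι → Icc a b × Icc a b) | IsPrePartitionFamily (E q.1) q.2} := by
  have hmem {g : Z × (ι → Icc a b × Icc a b) → Icc a b} (hg : Continuous g) :
      IsClosed {q | g q ∈ E q.1} := hE.preimage (continuous_fst.prodMk hg)
  simp only [IsPrePartitionFamily, Pairwise, ofPred_and, ofPred_forall, ofPred_or]
  refine .inter (isClosed_iInter fun i => ?_)
    (isClosed_iInter fun i => isClosed_iInter fun j => isClosed_iInter fun _ => ?_)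
  · exact (isClosed_le (by fun_prop) (by fun_prop)).inter
      ((hmem (by fun_prop)).inter (hmem (by fun_prop)))
  · exact (isClosed_le (by fun_prop) (by fun_prop)).union (isClosed_le (by fun_prop) (by fun_prop))

theorem isClosed_setOfPred_exists_family {ι : Type*} [Fintype ι] (hF : Continuous ↿F)
    (hE : IsClosed {p : Z × Icc a b | p.2 ∈ E p.1}) (ε δ : ℝ) :
    IsClosed {z | ∃ I : ι → Icc a b × Icc a b, IsPrePartitionFamily (E z) I ∧
      ∑ i, ((I i).2 - (I i).1 : ℝ) ≤ δ ∧ ε ≤ ∑ i, osc (F z) (Icc (I i).1 (I i).2)} := by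
  let W : Set (Z × (ι → Icc a b × Icc a b)) := {q | IsPrePartitionFamily (E q.1) q.2 ∧
    ∑ i, ((q.2 i).2 - (q.2 i).1 : ℝ) ≤ δ ∧ ε ≤ ∑ i, osc (F q.1) (uIcc (q.2 i).1 (q.2 i).2)}
  have hW : IsClosed W := by
    have hF' : Continuous ↿fun q : Z × (ι → Icc a b × Icc a b) => F q.1 :=
      hF.comp (continuous_fst.fst.prodMk continuous_snd)
    have hlen : Continuous fun q : Z × (ι → Icc a b × Icc a b) =>
        ∑ i, ((q.2 i).2 - (q.2 i).1 : ℝ) := by fun_prop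
    refine (isClosed_setOfPred_isPrePartitionFamily hE).inter
      ((isClosed_le hlen continuous_const).inter ?_)
    exact isClosed_le continuous_const (continuous_finsetSum _ fun i _ =>
      continuous_osc_uIcc hF' (by fun_prop) (by fun_prop))
  convert! isClosedMap_fst_of_compactSpace W hW using 1
  ext z
  simp only [W, mem_ofPred_eq, mem_image, Prod.exists, exists_and_right, exists_eq_right]
  refine exists_congr fun I => and_congr_right fun hI => ?_
  simp only [fun i => uIcc_of_le (Subtype.coe_le_coe.2 (hI.1 i).1)]

theorem forall_pos_exists_pos_iff_nat {P : ℝ → ℝ → Prop}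
    (hP : ∀ ⦃ε ε' δ δ'⦄, ε ≤ ε' → δ' ≤ δ → P ε δ → P ε' δ') :
    (∀ ε > 0, ∃ δ > 0, P ε δ) ↔ ∀ k : ℕ, ∃ m : ℕ, P (1 / (k + 1)) (1 / (m + 1)) := by
  constructor
  · intro h k
    obtain ⟨δ, hδ, hPδ⟩ := h _ (Nat.one_div_pos_of_nat (n := k))
    obtain ⟨m, hm⟩ := exists_nat_one_div_lt hδ
    exact ⟨m, hP le_rfl hm.le hPδ⟩
  · intro h ε hε
    obtain ⟨k, hk⟩ := exists_nat_one_div_lt hε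
    obtain ⟨m, hm⟩ := h k
    exact ⟨_, Nat.one_div_pos_of_nat, hP hk.le le_rfl hm⟩

variable [MeasurableSpace Z] [OpensMeasurableSpace Z]

theorem measurableSet_acStar (hF : Continuous ↿F)
    (hE : IsClosed {p : Z × Icc a b | p.2 ∈ E p.1}) :
    MeasurableSet {z | ACStar a b (F z) (Subtype.val '' E z)} := by
  have acStar_iff_nat (z : Z) := acStar_image_iff_forall_family.trans <|
    forall_pos_exists_pos_iff_nat (P := fun ε δ => ∀ (n : ℕ) (I : Fin n → Icc a b × Icc a b),
      IsPrePartitionFamily (E z) I → ∑ i, ((I i).2 - (I i).1 : ℝ) ≤ δ →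
        ∑ i, osc (F z) (Icc (I i).1 (I i).2) < ε)
      fun _ _ _ _ hε hδ h n I hI hlen => (h n I hI (hlen.trans hδ)).trans_le hε
  simp only [acStar_iff_nat, ofPred_forall, ofPred_exists]
  refine .iInter fun k => .iUnion fun m => .iInter fun n => ?_
  convert (isClosed_setOfPred_exists_family (ι := Fin n) hF hE (1 / (k + 1))
    (1 / (m + 1))).measurableSet.compl using 1
  ext z
  simp

theorem DFMap_measurable_general (hF : Continuous ↿F)
    (hE : IsClosed {p : Z × Icc a b | p.2 ∈ E p.1}) {D : Z → KSpace a b}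
    (hD : ∀ z, (D z : Set (Icc a b)) = Subtype.val ⁻¹' DF a b (F z) (Subtype.val '' E z)) :
    Measurable[_, borel (KSpace a b)] D := by
  have hclosed (z : Z) : IsClosed (Subtype.val '' E z) :=
    ((hE.preimage (Continuous.prodMk_right z)).isCompact.image continuous_subtype_val).isClosed
  refine measurable_closeds_of_compl_eq_iUnion (ι := ℚ × ℚ)
    (B := fun q => Subtype.val ⁻¹' Ioo (q.1 : ℝ) q.2)
    (P := fun q z => ACStar a b (F z) (Icc (q.1 : ℝ) q.2 ∩ Subtype.val '' E z))
    (fun q => isOpen_Ioo.preimage continuous_subtype_val) (fun q => ?_) fun z => ?_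
  · simp only [← image_preimage_inter]
    refine measurableSet_acStar hF (.inter ?_ hE)
    exact isClosed_Icc.preimage (continuous_subtype_val.comp continuous_snd)
  · rw [hD, ← preimage_compl, compl_DF_eq_iUnion_rat (hclosed z)]
    simp only [preimage_iUnion]

end Measurability

theorem DFMap_measurable (a b : ℝ) (hab : a < b) :
    @Measurable (C(Icc a b, ℝ) × KSpace a b) (KSpace a b) (borel _) (borel _)
      (DFMap a b hab) := by
  let : MeasurableSpace (C(Icc a b, ℝ) × KSpace a b) := borel _
  have : BorelSpace (C(Icc a b, ℝ) × KSpace a b) := ⟨rfl⟩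
  have hmem : IsClosed {q : (C(Icc a b, ℝ) × KSpace a b) × Icc a b | q.2 ∈ (q.1.2 : Set _)} :=
    (isClosed_setOfPred_mem_closeds _).preimage (continuous_fst.snd.prodMk continuous_snd)
  exact DFMap_measurable_general (F := fun p y => p.1 (projIcc a b hab.le y))
    (E := fun p => p.2) (by fun_prop) hmem fun _ => rfl
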